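/- Let q be a prime, β ≥ 1, k ≥ 2, 1 ≤ r_z ≤ β, and set n_q = βk; assume q > n_q. For j = 1, …, n_q define w_j = Π_{1 ≤ m ≤ n_q, m ≠ j} (j − m) ∈ F_q (nonzero since the points 1, …, n_q are distinct in F_q). Define H_X ∈ F_q^{r_z×n_q} by H_X[i, j−1] = j^i / w_j for i = 0, …, r_z−1, and let H_Z ∈ F_q^{β×n_q} be the Vandermonde matrix H_Z[r, j−1] = j^r for r = 0, …, β−1. Then: (a) H_X H_Zᵀ = 0; and (b) for every h = 0, …, k−1, the r_z×β submatrix of H_X on the columns I_h = {hβ, …, (h+1)β−1} has rank r_z. -/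

import Mathlib

/-!
The matrix `H_X` generates a generalized Reed–Solomon code with distinct evaluation points `x_j` and
column weights `1 / w_j`. The entry `(i, r)` of `H_X H_Zᵀ` is `∑ j, x_j ^ (i + r) / w_j`, which by
Lagrange interpolation is the coefficient of degree `n_q - 1` of the polynomial `X ^ (i + r)`; it
vanishes because `i + r ≤ r_z + β - 2 < n_q - 1`. A combination of the rows of `H_X` evaluates, up
to the nonzero weights, a polynomial of degree less than `r_z`, so it cannot vanish at `r_z` of the
points unless it is trivial. Hence any `r_z` or more columns of `H_X` have rank `r_z`.
-/

open Matrix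

/-- The `m`-th qudit position of helper `h`: index `h*β + m` in `Fin (β*k)`. -/
def blockIdx {β k : ℕ} (h : Fin k) (m : Fin β) : Fin (β * k) :=
  ⟨h.val * β + m.val, by
    have h1 : h.val + 1 ≤ k := h.isLt
    have h2 : m.val < β := m.isLt
    calc h.val * β + m.val < (h.val + 1) * β := by rw [Nat.succ_mul]; omega
      _ ≤ k * β := Nat.mul_le_mul_right β h1
      _ = β * k := Nat.mul_comm k β⟩

section Field

variable {F ι : Type*} [Field F] {x : ι → F}

theorem sum_eval_div_prod_sub_eq_zero [DecidableEq ι] {s : Finset ι} (hx : Set.InjOn x s)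
    {P : Polynomial F} (hP : P.natDegree + 1 < s.card) :
    ∑ j ∈ s, P.eval (x j) / ∏ m ∈ s.erase j, (x j - x m) = 0 := by
  have hdeg : P.degree < s.card :=
    P.degree_le_natDegree.trans_lt (by exact_mod_cast Nat.lt_of_succ_lt hP)
  rw [← Lagrange.coeff_eq_sum hx hdeg]
  exact Polynomial.coeff_eq_zero_of_natDegree_lt (Nat.lt_sub_of_add_lt hP)

theorem sum_pow_div_prod_sub_eq_zero [DecidableEq ι] {s : Finset ι} (hx : Set.InjOn x s)
    {d : ℕ} (hd : d + 1 < s.card) :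
    ∑ j ∈ s, x j ^ d / ∏ m ∈ s.erase j, (x j - x m) = 0 := by
  simpa using sum_eval_div_prod_sub_eq_zero hx (P := Polynomial.X ^ d) (by simpa using hd)

theorem prod_erase_sub_ne_zero [DecidableEq ι] {s : Finset ι} (hx : Set.InjOn x s)
    {j : ι} (hj : j ∈ s) : ∏ m ∈ s.erase j, (x j - x m) ≠ 0 :=
  Finset.prod_ne_zero_iff.mpr fun _ hm => sub_ne_zero.mpr fun h =>
    Finset.ne_of_mem_erase hm (hx hj (Finset.mem_of_mem_erase hm) h).symm

variable [Fintype ι]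

theorem linearIndependent_pow_div {w : ι → F} (hx : Function.Injective x) (hw : ∀ j, w j ≠ 0)
    {r : ℕ} (hr : r ≤ Fintype.card ι) :
    LinearIndependent F fun (i : Fin r) (j : ι) => x j ^ (i : ℕ) / w j := by
  obtain ⟨e⟩ : Nonempty (Fin r ↪ ι) := Function.Embedding.nonempty_of_card_le (by simpa using hr)
  refine Fintype.linearIndependent_iff.mpr fun c hc => congrFun ?_
  refine eq_zero_of_forall_index_sum_pow_mul_eq_zero (hx.comp e.injective) fun m => ?_
  have hsum : (∑ i : Fin r, x (e m) ^ (i : ℕ) * c i) / w (e m) = 0 := by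
    simpa [Finset.sum_div, mul_comm, mul_div_assoc] using congrFun hc (e m)
  exact (div_eq_zero_iff.mp hsum).resolve_right (hw _)

theorem rank_of_pow_div {w : ι → F} (hx : Function.Injective x) (hw : ∀ j, w j ≠ 0)
    {r : ℕ} (hr : r ≤ Fintype.card ι) :
    (of fun (i : Fin r) (j : ι) => x j ^ (i : ℕ) / w j).rank = r :=
  (linearIndependent_pow_div hx hw hr).rank_matrix.trans (Fintype.card_fin r)

theorem explicit_HX_construction_general [DecidableEq ι] (hx : Function.Injective x) {r s : ℕ}
    (hrs : r + s ≤ Fintype.card ι) :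
    let w : ι → F := fun j => ∏ m ∈ Finset.univ.erase j, (x j - x m)
    let HX : Matrix (Fin r) ι F := of fun i j => x j ^ (i : ℕ) / w j
    let HZ : Matrix (Fin s) ι F := of fun i j => x j ^ (i : ℕ)
    HX * HZᵀ = 0 ∧ ∀ {κ : Type*} [Fintype κ] (e : κ ↪ ι), r ≤ Fintype.card κ →
      (HX.submatrix id e).rank = r := by
  intro w HX HZ
  refine ⟨?_, fun e hr => ?_⟩
  · ext i l
    have hdeg : (i + l : ℕ) + 1 < (Finset.univ : Finset ι).card := by
      rw [Finset.card_univ]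
      omega
    calc (HX * HZᵀ) i l = ∑ j, x j ^ (i + l : ℕ) / w j := by
          simp only [HX, HZ, mul_apply, transpose_apply, of_apply, pow_add, div_mul_eq_mul_div]
      _ = 0 := sum_pow_div_prod_sub_eq_zero hx.injOn hdeg
  · have hw (j : ι) : w j ≠ 0 := prod_erase_sub_ne_zero hx.injOn (Finset.mem_univ j)
    exact rank_of_pow_div (hx.comp e.injective) (fun j => hw (e j)) hr

end Field

theorem natCast_add_one_injective_of_le_char (R : Type*) [AddGroupWithOne R] {n p : ℕ}
    [CharP R p] (hn : n ≤ p) : Function.Injective fun j : Fin n => ((j + 1 : ℕ) : R) := by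
  intro a b hab
  have hcast : ((a : ℕ) : R) = (b : ℕ) := by simpa using hab
  exact Fin.ext (CharP.natCast_injOn_Iio R p (a.isLt.trans_le hn) (b.isLt.trans_le hn) hcast)

theorem blockIdx_injective {β k : ℕ} (h : Fin k) :
    Function.Injective (blockIdx h : Fin β → Fin (β * k)) := fun _ _ hab =>
  Fin.ext (Nat.add_left_cancel (congrArg Fin.val hab))

/-- **Explicit `H_X` construction (Remark 3 of the paper).**
Let `q` be prime, `β ≥ 1`, `k ≥ 2`, `1 ≤ r_z ≤ β`, `n_q = βk`, `q > n_q`.  With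
`w_j = ∏_{m ≠ j} (j - m)` over the points `1, …, n_q` of `𝔽_q`, define
`H_X[i, j-1] = j^i / w_j` and the Vandermonde `H_Z[r, j-1] = j^r`.  Then
(a) `H_X H_Zᵀ = 0`, and (b) for every helper `h`, the `r_z×β` submatrix of `H_X` on the
columns `I_h = {hβ, …, (h+1)β - 1}` has rank `r_z`. -/
theorem explicit_HX_construction (q β k r_z : ℕ) [Fact q.Prime]
    (hβ : 1 ≤ β) (hk : 2 ≤ k) (hrz1 : 1 ≤ r_z) (hrzβ : r_z ≤ β) (hq : β * k < q) :
    let w : Fin (β * k) → ZMod q := fun j =>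
      ∏ m ∈ Finset.univ.erase j,
        ((((j : ℕ) + 1 : ℕ) : ZMod q) - (((m : ℕ) + 1 : ℕ) : ZMod q))
    let HX : Matrix (Fin r_z) (Fin (β * k)) (ZMod q) :=
      Matrix.of fun i j => (((j : ℕ) + 1 : ℕ) : ZMod q) ^ (i : ℕ) / w j
    let HZ : Matrix (Fin β) (Fin (β * k)) (ZMod q) :=
      Matrix.of fun r j => (((j : ℕ) + 1 : ℕ) : ZMod q) ^ (r : ℕ)
    HX * HZᵀ = 0 ∧ ∀ h : Fin k, (HX.submatrix id (blockIdx h)).rank = r_z := by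
  have hcard : r_z + β ≤ Fintype.card (Fin (β * k)) := by rw [Fintype.card_fin]; nlinarith
  obtain ⟨horth, hrank⟩ := explicit_HX_construction_general
    (natCast_add_one_injective_of_le_char (ZMod q) hq.le) hcard
  exact ⟨horth, fun h => hrank ⟨blockIdx h, blockIdx_injective h⟩ (by simpa using hrzβ)⟩
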